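/- Let n ≥ 1, let A₀ ∈ ℝ^{n×n} be singular of rank n − 1, let F : ℝ^{n×n} → ℝ^{n×n} be bounded on a ball B(A₀, δ), and let k > n² be an integer. Then the integral over B(A₀, δ) (with respect to Lebesgue measure on ℝ^{n²}) of ‖A⁻¹ − F(A)‖^k dA diverges to +∞ (where the integrand is defined Lebesgue-almost everywhere since singular matrices form a null set). -/

import Mathlib

open MeasureTheory

attribute [local instance] Matrix.frobeniusNormedAddCommGroup

noncomputable instance (n : ℕ) : MeasureSpace (Matrix (Fin n) (Fin n) ℝ) :=
  inferInstanceAs (MeasureSpace (Fin n → Fin n → ℝ))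

/-!
By the Neumann series, the ball of radius `‖a⁻¹‖⁻¹` around a unit `a` consists of units, so
`‖a⁻¹‖ ≥ ‖a - a₀‖⁻¹` whenever `a₀` is not a unit. A bounded perturbation costs at most half of this
lower bound near `a₀`, and in polar coordinates the integral of `‖a - a₀‖ ^ (-p)` becomes that of
`r ^ (d - 1 - p)` near `r = 0`, where `d` is the dimension; it diverges as soon as `d ≤ p`.
Nothing is specific to matrices: the argument takes place in any finite-dimensional real algebra,
almost all of whose elements are units because a line `a + ℝ · 1` contains finitely many nonunits.
-/

open Filter Metric Module Set Topology

section NormRpow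

variable {E : Type*} [NormedAddCommGroup E] [NormedSpace ℝ E] [FiniteDimensional ℝ E]
  [Nontrivial E] [MeasurableSpace E] [BorelSpace E] (μ : Measure E) [μ.IsAddHaarMeasure]
  {p : ℝ}

lemma not_integrableOn_ball_norm_rpow_neg (hp : finrank ℝ E ≤ p) {r : ℝ} (hr : 0 < r) :
    ¬ IntegrableOn (fun x : E ↦ ‖x‖ ^ (-p)) (ball 0 r) μ := by
  have radial_eq : EqOn (fun y : ℝ ↦ y ^ (finrank ℝ E - 1) • y ^ (-p))
      (fun y ↦ y ^ ((finrank ℝ E : ℝ) - 1 - p)) (Ioo 0 r) := fun y hy ↦ by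
    simp only [smul_eq_mul]
    rw [← Real.rpow_natCast, ← Real.rpow_add hy.1, Nat.cast_pred finrank_pos, ← sub_eq_add_neg]
  rw [integrableOn_fun_norm_addHaar μ (f := fun y ↦ y ^ (-p)),
    integrableOn_congr_fun radial_eq measurableSet_Ioo,
    intervalIntegral.integrableOn_Ioo_rpow_iff hr]
  linarith

lemma lintegral_ball_norm_sub_rpow_neg_eq_top (hp : finrank ℝ E ≤ p) (x₀ : E) {r : ℝ}
    (hr : 0 < r) : ∫⁻ x in ball x₀ r, ENNReal.ofReal (‖x - x₀‖ ^ (-p)) ∂μ = ⊤ := by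
  have hmeas : Measurable fun x : E ↦ ‖x‖ ^ (-p) := by fun_prop
  have ball_eq : ball x₀ r = (· - x₀) ⁻¹' ball 0 r := by
    ext x
    simp [dist_eq_norm]
  rw [ball_eq, (measurePreserving_sub_right μ x₀).setLIntegral_comp_preimage measurableSet_ball
    hmeas.ennreal_ofReal]
  by_contra hfin
  exact not_integrableOn_ball_norm_rpow_neg μ hp hr <|
    (lintegral_ofReal_ne_top_iff_integrable hmeas.aestronglyMeasurable
      (.of_forall fun x ↦ by positivity)).1 hfin

lemma setLIntegral_eq_top_of_norm_sub_rpow_neg_le (hp : finrank ℝ E ≤ p) {f : E → ENNReal}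
    {x₀ : E} {s : Set E} (hs : s ∈ 𝓝 x₀) {c : ENNReal} (hc : c ≠ 0)
    (hf : ∀ᶠ x in 𝓝 x₀ ⊓ ae μ, c * ENNReal.ofReal (‖x - x₀‖ ^ (-p)) ≤ f x) :
    ∫⁻ x in s, f x ∂μ = ⊤ := by
  obtain ⟨t, ht, u, hu, hf⟩ := mem_inf_iff_superset.1 hf
  obtain ⟨r, hr, hball⟩ := Metric.mem_nhds_iff.1 (inter_mem hs ht)
  refine top_le_iff.1 ?_
  calc
    ⊤ = c * ∫⁻ x in ball x₀ r, ENNReal.ofReal (‖x - x₀‖ ^ (-p)) ∂μ := by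
      rw [lintegral_ball_norm_sub_rpow_neg_eq_top μ hp x₀ hr, ENNReal.mul_top hc]
    _ ≤ ∫⁻ x in ball x₀ r, c * ENNReal.ofReal (‖x - x₀‖ ^ (-p)) ∂μ := lintegral_const_mul_le _ _
    _ ≤ ∫⁻ x in ball x₀ r, f x ∂μ :=
      setLIntegral_mono_ae' measurableSet_ball <| by
        filter_upwards [hu] with x hxu hx using hf ⟨(hball hx).2, hxu⟩
    _ ≤ ∫⁻ x in s, f x ∂μ := lintegral_mono_set (hball.trans inter_subset_left)

end NormRpow

section Inverse

variable {R : Type*} [NormedRing R] [HasSummableGeomSeries R] {a₀ : R}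

lemma inv_norm_sub_le_norm_inverse {a : R} (ha : IsUnit a) (ha₀ : ¬ IsUnit a₀) :
    ‖a - a₀‖⁻¹ ≤ ‖Ring.inverse a‖ := by
  obtain ⟨u, rfl⟩ := ha
  have : Nontrivial R := nontrivial_of_ne (u : R) a₀ fun h ↦ ha₀ (h ▸ u.isUnit)
  rw [Ring.inverse_unit]
  refine inv_le_of_inv_le₀ (Units.norm_pos u⁻¹) ?_
  by_contra! hlt
  exact ha₀ (u.ofNearby a₀ (by rwa [norm_sub_rev])).isUnit

lemma eventually_inv_norm_sub_div_two_le_norm_inverse_sub (ha₀ : ¬ IsUnit a₀) {F : R → R}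
    (hF : IsBoundedUnder (· ≤ ·) (𝓝 a₀) fun a ↦ ‖F a‖) :
    ∀ᶠ a in 𝓝 a₀, IsUnit a → ‖a - a₀‖⁻¹ / 2 ≤ ‖Ring.inverse a - F a‖ := by
  obtain ⟨C, hC⟩ := hF.eventually_le
  have hlarge : ∀ᶠ a in 𝓝[≠] a₀, 2 * C ≤ ‖a - a₀‖⁻¹ :=
    (tendsto_norm_sub_self_nhdsNE a₀).inv_tendsto_nhdsGT_zero.eventually_ge_atTop _
  filter_upwards [hC, eventually_nhdsWithin_iff.1 hlarge] with a haC hafar ha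
  have hne : a ≠ a₀ := fun h ↦ ha₀ (h ▸ ha)
  linarith [hafar hne, inv_norm_sub_le_norm_inverse ha ha₀,
    norm_sub_norm_le (Ring.inverse a) (F a)]

end Inverse

lemma finite_spectrum_of_isIntegral {K A : Type*} [Field K] [Ring A] [Algebra K A] {a : A}
    (ha : IsIntegral K a) : (spectrum K a).Finite := by
  nontriviality A
  refine (Polynomial.finite_setOfPred_isRoot (minpoly.ne_zero ha)).subset fun x hx ↦ ?_
  have hmem := spectrum.subset_polynomial_aeval a (minpoly K a) (mem_image_of_mem _ hx)
  rwa [minpoly.aeval, spectrum.zero_eq] at hmem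

section NormedAlgebra

variable {R : Type*} [NormedRing R] [NormedAlgebra ℝ R] [FiniteDimensional ℝ R]
  [MeasurableSpace R] [BorelSpace R] (μ : Measure R) [μ.IsAddHaarMeasure]

lemma ae_isUnit : ∀ᵐ a ∂μ, IsUnit a := by
  have : CompleteSpace R := FiniteDimensional.complete ℝ R
  refine ae_mem_of_ae_add_linearMap_mem (Algebra.linearMap ℝ R) volume μ
    Units.isOpen.measurableSet fun a ↦ ?_
  have hfin : (spectrum ℝ (-a)).Finite :=
    finite_spectrum_of_isIntegral (Algebra.IsIntegral.isIntegral (-a))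
  filter_upwards [hfin.countable.ae_notMem volume] with x hx
  change IsUnit (a + algebraMap ℝ R x)
  simpa only [sub_neg_eq_add, add_comm] using spectrum.notMem_iff.1 hx

theorem integral_error_diverges_general {a₀ : R} (ha₀ : ¬ IsUnit a₀) {s : Set R} (hs : s ∈ 𝓝 a₀)
    {F : R → R} (hF : IsBoundedUnder (· ≤ ·) (𝓝 a₀) fun a ↦ ‖F a‖) {p : ℝ}
    (hp : finrank ℝ R ≤ p) :
    ∫⁻ a in s, ENNReal.ofReal (‖Ring.inverse a - F a‖ ^ p) ∂μ = ⊤ := by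
  have : CompleteSpace R := FiniteDimensional.complete ℝ R
  have : Nontrivial R := not_subsingleton_iff_nontrivial.1 fun _ ↦ ha₀ (isUnit_of_subsingleton a₀)
  have hp₀ : 0 ≤ p := (Nat.cast_nonneg _).trans hp
  have hc : ENNReal.ofReal (2 ^ (-p)) ≠ 0 := ENNReal.ofReal_ne_zero_iff.2 (by positivity)
  refine setLIntegral_eq_top_of_norm_sub_rpow_neg_le μ hp hs hc ?_
  filter_upwards [(eventually_inv_norm_sub_div_two_le_norm_inverse_sub ha₀ hF).filter_mono
    inf_le_left, (ae_isUnit μ).filter_mono inf_le_right] with a hle ha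
  rw [← ENNReal.ofReal_mul (by positivity)]
  refine ENNReal.ofReal_le_ofReal ?_
  calc
    2 ^ (-p) * ‖a - a₀‖ ^ (-p) = (‖a - a₀‖⁻¹ / 2) ^ p := by
      rw [div_eq_inv_mul, Real.mul_rpow (by positivity) (by positivity),
        Real.inv_rpow zero_le_two, Real.inv_rpow (norm_nonneg _), Real.rpow_neg zero_le_two,
        Real.rpow_neg (norm_nonneg _)]
    _ ≤ ‖Ring.inverse a - F a‖ ^ p := by gcongr; exact hle ha

end NormedAlgebra

section FrobeniusNorm

attribute [local instance] Matrix.frobeniusNormedRing Matrix.frobeniusNormedAlgebra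

-- The topology is named explicitly because the one of the Frobenius norm is not reducibly equal to
-- the default topology on matrices, which instance search would pick.
instance (n : ℕ) : @BorelSpace (Matrix (Fin n) (Fin n) ℝ)
    PseudoMetricSpace.toUniformSpace.toTopologicalSpace _ :=
  inferInstanceAs (BorelSpace (Fin n → Fin n → ℝ))

instance (n : ℕ) : @Measure.IsAddHaarMeasure (Matrix (Fin n) (Fin n) ℝ) _
    PseudoMetricSpace.toUniformSpace.toTopologicalSpace _ volume :=
  Measure.pi.isAddHaarMeasure fun _ : Fin n ↦ (volume : Measure (Fin n → ℝ))

end FrobeniusNorm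

theorem integral_error_diverges {n : ℕ} (hn : 1 ≤ n)
    (A₀ : Matrix (Fin n) (Fin n) ℝ) (hdet : A₀.det = 0) (hrank : A₀.rank = n - 1)
    (δ : ℝ) (hδ : 0 < δ)
    (F : Matrix (Fin n) (Fin n) ℝ → Matrix (Fin n) (Fin n) ℝ)
    (C : ℝ) (hF : ∀ A ∈ Metric.ball A₀ δ, ‖F A‖ ≤ C)
    (k : ℕ) (hk : n ^ 2 < k) :
    ∫⁻ A in Metric.ball A₀ δ, ENNReal.ofReal (‖A⁻¹ - F A‖ ^ k) = ⊤ := by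
  let _ : NormedRing (Matrix (Fin n) (Fin n) ℝ) := Matrix.frobeniusNormedRing
  let _ : NormedAlgebra ℝ (Matrix (Fin n) (Fin n) ℝ) := Matrix.frobeniusNormedAlgebra
  have hsing : ¬ IsUnit A₀ := by simp [Matrix.isUnit_iff_isUnit_det, hdet]
  have hdim : (finrank ℝ (Matrix (Fin n) (Fin n) ℝ) : ℝ) ≤ k := by
    simpa [finrank_matrix, ← sq] using mod_cast hk.le
  have hball : ball A₀ δ ∈ 𝓝 A₀ := ball_mem_nhds A₀ hδ
  simpa only [Real.rpow_natCast, Matrix.nonsing_inv_eq_ringInverse] using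
    integral_error_diverges_general volume hsing hball
      (isBoundedUnder_of_eventually_le (eventually_of_mem hball hF)) hdim
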